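/- Let p ≥ 1 be an integer and let s be a real number with s > 2p. Then ∫₀^∞ x^{s−1}/(cosh x − cos x)^p dx = 2^p Γ(s) ζ_{2p}(s, p | (1+i,1−i)^p) and ∫₀^∞ x^{s−1}/(cosh x + cos x)^p dx = 2^p Γ(s) ζ̃_{2p}(s, p | (1+i,1−i)^p). -/

import Mathlib

/-!
For `ε = ±1`, the factorisation
`(1 - ε e ^ (-(1+i)x)) (1 - ε e ^ (-(1-i)x)) = 2 e ^ (-x) (cosh x - ε cos x)`
exhibits `(cosh x - ε cos x) ^ (-p)` as `2 ^ p e ^ (-px)` times a product of `2p` geometric series.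
So both integrals are instances of Barnes' integral representation of a multiple zeta function
`∑ uⁿ (w + a · n) ^ (-s)` with complex `w` and `aⱼ` in the right half-plane: expand
`e ^ (-wx) ∏ (1 - uⱼ e ^ (-aⱼ x))⁻¹` into exponentials `e ^ (-rx)` and take the Mellin transform
termwise. The transform of `e ^ (-rx)` is `Γ(s) r ^ (-s)`, by analytic continuation from positive
`r`. The interchange is legitimate because, with `d` parameters `aⱼ` and `σ = re s`, the quantity
`(re w + ∑ nⱼ re aⱼ) ^ (-σ)` is at most a product of `d` factors `O((nⱼ + 1) ^ (-σ/d))`, which is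
summable as soon as `σ > d`.
-/

open MeasureTheory Real

/-- The Barnes zeta function `ζ_{2p}(s, p | (1+i,1−i)^p)` with the parameters `1+i` and `1−i`
each repeated `p` times. -/
noncomputable def barnesZetaRep (p : ℕ) (s : ℂ) : ℂ :=
  ∑' nm : (Fin p → ℕ) × (Fin p → ℕ),
    ((p : ℂ) + (1 + Complex.I) * ∑ j, (nm.1 j : ℂ)
      + (1 - Complex.I) * ∑ j, (nm.2 j : ℂ)) ^ (-s)

/-- The alternating Barnes zeta function `ζ̃_{2p}(s, p | (1+i,1−i)^p)`. -/
noncomputable def barnesZetaRepAlt (p : ℕ) (s : ℂ) : ℂ :=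
  ∑' nm : (Fin p → ℕ) × (Fin p → ℕ),
    (-1 : ℂ) ^ (∑ j, nm.1 j + ∑ j, nm.2 j) *
      ((p : ℂ) + (1 + Complex.I) * ∑ j, (nm.1 j : ℂ)
        + (1 - Complex.I) * ∑ j, (nm.2 j : ℂ)) ^ (-s)

open Set Filter Topology

section ProductOfSeries

variable {ι : Type*} [Fintype ι] {κ : ι → Type*}

theorem subset_piFinset_image_eval [DecidableEq ι] [∀ i, DecidableEq (κ i)]
    (S : Finset (∀ i, κ i)) : S ⊆ Fintype.piFinset fun i => S.image (Function.eval i) :=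
  fun _ hn => Fintype.mem_piFinset.2 fun i => Finset.mem_image_of_mem (Function.eval i) hn

theorem tendsto_piFinset_atTop [DecidableEq ι] :
    Tendsto (fun t : ∀ i, Finset (κ i) => Fintype.piFinset t) (Filter.pi fun _ => atTop) atTop := by
  classical
  refine tendsto_atTop.2 fun S => ?_
  have hge (i : ι) : ∀ᶠ t in Filter.pi fun i => (atTop : Filter (Finset (κ i))),
      S.image (Function.eval i) ⊆ t i :=
    (tendsto_eval_pi _ i).eventually (eventually_ge_atTop _)
  filter_upwards [eventually_all.2 hge] with t ht
  exact (subset_piFinset_image_eval S).trans (Fintype.piFinset_subset _ _ ht)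

variable {R : Type*} [NormedCommRing R] [NormOneClass R] {f : ∀ i, κ i → R}

theorem summable_norm_prod_pi (hf : ∀ i, Summable fun k => ‖f i k‖) :
    Summable fun n : ∀ i, κ i => ‖∏ i, f i (n i)‖ := by
  classical
  have hprod : Summable fun n : ∀ i, κ i => ∏ i, ‖f i (n i)‖ := by
    refine summable_of_sum_le (c := ∏ i, ∑' k, ‖f i k‖)
      (fun n => Finset.prod_nonneg fun i _ => norm_nonneg _) fun S => ?_
    calc ∑ n ∈ S, ∏ i, ‖f i (n i)‖
        ≤ ∑ n ∈ Fintype.piFinset fun i => S.image (Function.eval i), ∏ i, ‖f i (n i)‖ :=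
          Finset.sum_le_sum_of_subset_of_nonneg (subset_piFinset_image_eval S) fun n _ _ =>
            Finset.prod_nonneg fun i _ => norm_nonneg _
      _ = ∏ i, ∑ k ∈ S.image (Function.eval i), ‖f i k‖ :=
          (Finset.prod_univ_sum _ fun i k => ‖f i k‖).symm
      _ ≤ ∏ i, ∑' k, ‖f i k‖ :=
          Finset.prod_le_prod (fun i _ => Finset.sum_nonneg fun k _ => norm_nonneg _)
            fun i _ => (hf i).sum_le_tsum _ fun k _ => norm_nonneg _
  exact hprod.of_nonneg_of_le (fun n => norm_nonneg _) fun n => Finset.norm_prod_le _ _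

theorem hasSum_prod_pi [CompleteSpace R] (hf : ∀ i, Summable fun k => ‖f i k‖) :
    HasSum (fun n : ∀ i, κ i => ∏ i, f i (n i)) (∏ i, ∑' k, f i k) := by
  classical
  have hsum := (summable_norm_prod_pi hf).of_norm
  have hbox : Tendsto (fun t : ∀ i, Finset (κ i) => ∑ n ∈ Fintype.piFinset t, ∏ i, f i (n i))
      (Filter.pi fun _ => atTop) (𝓝 (∏ i, ∑' k, f i k)) := by
    simp_rw [← Finset.prod_univ_sum]
    exact tendsto_finsetProd _ fun i _ => (hf i).of_norm.hasSum.comp (tendsto_eval_pi _ i)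
  exact hsum.hasSum_iff.2 (tendsto_nhds_unique (hsum.hasSum.comp tendsto_piFinset_atTop) hbox)

theorem hasSum_prod_geometric {𝕜 : Type*} [NormedField 𝕜] [CompleteSpace 𝕜] {z : ι → 𝕜}
    (hz : ∀ j, ‖z j‖ < 1) :
    HasSum (fun n : ι → ℕ => ∏ j, z j ^ n j) (∏ j, (1 - z j)⁻¹) := by
  simpa only [tsum_geometric_of_norm_lt_one (hz _)] using
    hasSum_prod_pi fun j => summable_norm_geometric_of_norm_lt_one (hz j)

end ProductOfSeries

section GammaIntegral

variable {s r : ℂ}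

theorem integrableOn_rpow_mul_exp_neg_mul {q b : ℝ} (hq : -1 < q) (hb : 0 < b) :
    IntegrableOn (fun x : ℝ => x ^ q * rexp (-(b * x))) (Ioi 0) := by
  simpa using integrableOn_rpow_mul_exp_neg_mul_rpow (p := 1) hq one_pos hb

theorem norm_cpow_sub_one_mul_cexp (s r : ℂ) {x : ℝ} (hx : 0 < x) :
    ‖(x : ℂ) ^ (s - 1) * Complex.exp (-(r * x))‖ = x ^ (s.re - 1) * rexp (-(r.re * x)) := by
  simp [Complex.norm_cpow_eq_rpow_re_of_pos hx, Complex.norm_exp]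

theorem mellinConvergent_cexp_neg_mul (hs : 0 < s.re) (hr : 0 < r.re) :
    MellinConvergent (fun x => Complex.exp (-(r * x))) s := by
  refine (integrableOn_rpow_mul_exp_neg_mul (by linarith : -1 < s.re - 1) hr).mono'
    (Measurable.aestronglyMeasurable (by fun_prop)) ?_
  filter_upwards [ae_restrict_mem measurableSet_Ioi] with x hx
  exact (norm_cpow_sub_one_mul_cexp s r hx).le

theorem differentiableAt_mellin_cexp_neg_mul (hs : 0 < s.re) {r₀ : ℂ} (hr₀ : 0 < r₀.re) :
    DifferentiableAt ℂ (fun r : ℂ => mellin (fun x => Complex.exp (-(r * x))) s) r₀ := by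
  have hnhds : {r : ℂ | r₀.re / 2 < r.re} ∈ 𝓝 r₀ :=
    (isOpen_lt continuous_const Complex.continuous_re).mem_nhds (half_lt_self hr₀)
  refine (hasDerivAt_integral_of_dominated_loc_of_deriv_le
    (μ := volume.restrict (Ioi 0))
    (F := fun r x => (x : ℂ) ^ (s - 1) * Complex.exp (-(r * x)))
    (F' := fun r x => (x : ℂ) ^ (s - 1) * Complex.exp (-(r * x)) * -(x : ℂ))
    (bound := fun x => x ^ s.re * rexp (-(r₀.re / 2 * x))) hnhds
    (.of_forall fun r => Measurable.aestronglyMeasurable (by fun_prop))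
    (mellinConvergent_cexp_neg_mul hs hr₀)
    (Measurable.aestronglyMeasurable (by fun_prop)) ?_
    (integrableOn_rpow_mul_exp_neg_mul (by linarith) (half_pos hr₀)) ?_).2.differentiableAt
  · filter_upwards [ae_restrict_mem measurableSet_Ioi] with x (hx : 0 < x) r (hr : _ < r.re)
    calc ‖(x : ℂ) ^ (s - 1) * Complex.exp (-(r * x)) * -(x : ℂ)‖
        = x ^ s.re * rexp (-(r.re * x)) := by
          rw [norm_mul, norm_cpow_sub_one_mul_cexp s r hx, norm_neg, Complex.norm_of_nonneg hx.le,
            mul_right_comm, ← rpow_add_one hx.ne', sub_add_cancel]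
      _ ≤ x ^ s.re * rexp (-(r₀.re / 2 * x)) := by gcongr
  · refine .of_forall fun x r _ => ?_
    have hlin : HasDerivAt (fun r : ℂ => -(r * x)) (-(x : ℂ)) r := by
      simpa using! ((hasDerivAt_id r).mul_const (x : ℂ)).neg
    simpa only [smul_eq_mul, mul_assoc] using hlin.cexp.const_mul ((x : ℂ) ^ (s - 1))

theorem mellin_cexp_neg_ofReal_mul (hs : 0 < s.re) {b : ℝ} (hb : 0 < b) :
    mellin (fun x => Complex.exp (-((b : ℂ) * x))) s = Complex.Gamma s * (b : ℂ) ^ (-s) := by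
  have harg : (b : ℂ).arg ≠ π := by simpa [Complex.arg_ofReal_of_nonneg hb.le] using pi_ne_zero.symm
  simp only [mellin, smul_eq_mul]
  rw [Complex.integral_cpow_mul_exp_neg_mul_Ioi hs hb, one_div, Complex.inv_cpow _ _ harg,
    ← Complex.cpow_neg, mul_comm]

theorem mellin_cexp_neg_mul (hs : 0 < s.re) (hr : 0 < r.re) :
    mellin (fun x => Complex.exp (-(r * x))) s = Complex.Gamma s * r ^ (-s) := by
  have hopen : IsOpen {r : ℂ | 0 < r.re} := isOpen_lt continuous_const Complex.continuous_re
  have hmellin : DifferentiableOn ℂ (fun r : ℂ => mellin (fun x => Complex.exp (-(r * x))) s)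
      {r | 0 < r.re} := fun r hr =>
    (differentiableAt_mellin_cexp_neg_mul hs hr).differentiableWithinAt
  have hgamma : DifferentiableOn ℂ (fun r : ℂ => Complex.Gamma s * r ^ (-s)) {r | 0 < r.re} :=
    fun r hr => ((differentiableAt_id.cpow_const (.inl hr)).const_mul _).differentiableWithinAt
  have hreal : ∃ᶠ r : ℂ in 𝓝[≠] ((1 : ℝ) : ℂ),
      mellin (fun x => Complex.exp (-(r * x))) s = Complex.Gamma s * r ^ (-s) := by
    have hcoe : Tendsto ((↑) : ℝ → ℂ) (𝓝[≠] 1) (𝓝[≠] ((1 : ℝ) : ℂ)) :=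
      Complex.continuous_ofReal.continuousWithinAt.tendsto_nhdsWithin fun x hx => by simpa using hx
    refine hcoe.frequently (Eventually.frequently ?_)
    filter_upwards [mem_nhdsWithin_of_mem_nhds (lt_mem_nhds one_pos)] with b hb
    exact mellin_cexp_neg_ofReal_mul hs hb
  exact (hmellin.analyticOnNhd hopen).eqOn_of_preconnected_of_frequently_eq
    (hgamma.analyticOnNhd hopen) (convex_halfSpace_re_gt 0).isPreconnected (by simp) hreal hr

theorem hasSum_mellin_cexp {ι : Type*} [Countable ι] {c r : ι → ℂ} {F : ℝ → ℂ}
    (hr : ∀ i, 0 < (r i).re) (hs : 0 < s.re)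
    (hF : ∀ x ∈ Ioi (0 : ℝ), HasSum (fun i => c i * Complex.exp (-(r i * x))) (F x))
    (hsum : Summable fun i => ‖c i‖ * (r i).re ^ (-s.re)) :
    HasSum (fun i => Complex.Gamma s * (c i * r i ^ (-s))) (mellin F s) := by
  let G (i : ι) (x : ℝ) : ℂ := c i * ((x : ℂ) ^ (s - 1) * Complex.exp (-(r i * x)))
  have hint (i : ι) : IntegrableOn (G i) (Ioi 0) :=
    (mellinConvergent_cexp_neg_mul hs (hr i)).const_mul (c i)
  have hval (i : ι) : ∫ x in Ioi 0, G i x = Complex.Gamma s * (c i * r i ^ (-s)) := by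
    have := mellin_cexp_neg_mul hs (hr i)
    simp only [mellin, smul_eq_mul] at this
    rw [integral_const_mul, this, mul_left_comm]
  have hnorm (i : ι) :
      ∫ x in Ioi 0, ‖G i x‖ = ‖c i‖ * (r i).re ^ (-s.re) * Real.Gamma s.re := by
    calc ∫ x in Ioi 0, ‖G i x‖
        = ∫ x in Ioi 0, ‖c i‖ * (x ^ (s.re - 1) * rexp (-((r i).re * x))) :=
          setIntegral_congr_fun measurableSet_Ioi fun x hx => by
            simp only [G, norm_mul (c i), norm_cpow_sub_one_mul_cexp s (r i) hx]
      _ = ‖c i‖ * (r i).re ^ (-s.re) * Real.Gamma s.re := by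
          rw [integral_const_mul, integral_rpow_mul_exp_neg_mul_Ioi hs (hr i), one_div,
            inv_rpow (hr i).le, ← rpow_neg (hr i).le, mul_assoc]
  have hG : mellin F s = ∫ x in Ioi 0, ∑' i, G i x :=
    setIntegral_congr_fun measurableSet_Ioi fun x hx => by
      simp only [G, mul_left_comm (c _), tsum_mul_left, (hF x hx).tsum_eq, smul_eq_mul]
  have := hasSum_integral_of_summable_integral_norm hint
    (by simpa only [hnorm] using hsum.mul_right (Real.Gamma s.re))
  simpa only [hG, hval] using this

end GammaIntegral

section BarnesZeta

variable {ι : Type*} [Fintype ι]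

/-- The Barnes zeta function `∑ (∏ uⱼ ^ nⱼ) (w + ∑ nⱼ aⱼ) ^ (-s)` with parameters `a`, twisted by
`u`: the choices `u = 1` and `u = -1` give the plain and the alternating Barnes zeta functions. The
parameters are indexed by a type rather than by `1, …, d`, as the sum is symmetric in them. -/
noncomputable def barnesZeta (u a : ι → ℂ) (w s : ℂ) : ℂ :=
  ∑' n : ι → ℕ, (∏ j, u j ^ n j) * (w + ∑ j, n j * a j) ^ (-s)

theorem summable_mul_succ_rpow_neg {b t : ℝ} (hb : 0 ≤ b) (ht : 1 < t) :
    Summable fun k : ℕ => (b * (k + 1)) ^ (-t) := by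
  have hnat : Summable fun k : ℕ => ((k + 1 : ℕ) : ℝ) ^ (-t) :=
    (summable_nat_add_iff 1).2 (summable_nat_rpow.2 (neg_lt_neg ht))
  refine (hnat.mul_left (b ^ (-t))).congr fun k => ?_
  rw [mul_rpow hb (by positivity), Nat.cast_add_one]

theorem add_sum_mul_pos {a : ι → ℝ} (ha : ∀ j, 0 ≤ a j) {w : ℝ} (hw : 0 < w) (n : ι → ℕ) :
    0 < w + ∑ j, n j * a j :=
  add_pos_of_pos_of_nonneg hw
    (Finset.sum_nonneg fun j _ => mul_nonneg (n j).cast_nonneg (ha j))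

theorem min_mul_succ_le_add_sum_mul {a : ι → ℝ} (ha : ∀ j, 0 ≤ a j) (w : ℝ) (n : ι → ℕ) (j : ι) :
    min w (a j) * (n j + 1) ≤ w + ∑ j, n j * a j := by
  have hterm : n j * a j ≤ ∑ j, n j * a j :=
    Finset.single_le_sum (f := fun j => n j * a j)
      (fun i _ => mul_nonneg (n i).cast_nonneg (ha i)) (Finset.mem_univ j)
  calc min w (a j) * (n j + 1) = min w (a j) + n j * min w (a j) := by ring
    _ ≤ w + n j * a j := by gcongr; exacts [min_le_left .., min_le_right ..]
    _ ≤ w + ∑ j, n j * a j := add_le_add_right hterm w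

theorem summable_add_sum_mul_rpow_neg {a : ι → ℝ} (ha : ∀ j, 0 < a j) {w σ : ℝ} (hw : 0 < w)
    (hσ : Fintype.card ι < σ) :
    Summable fun n : ι → ℕ => (w + ∑ j, n j * a j) ^ (-σ) := by
  rcases isEmpty_or_nonempty ι with _ | _
  · exact .of_finite
  have hcard : (0 : ℝ) < Fintype.card ι := by exact_mod_cast Fintype.card_pos
  set t : ℝ := σ / Fintype.card ι
  have ht : 1 < t := (one_lt_div hcard).2 hσ
  have hmin (j : ι) : 0 < min w (a j) := lt_min hw (ha j)
  have hR₀ (n : ι → ℕ) : 0 < w + ∑ j, n j * a j :=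
    add_sum_mul_pos (fun j => (ha j).le) hw n
  refine (summable_norm_prod_pi fun j =>
    (summable_mul_succ_rpow_neg (hmin j).le ht).norm).of_nonneg_of_le
    (fun n => rpow_nonneg (hR₀ n).le _) fun n => ?_
  set R : ℝ := w + ∑ j, n j * a j
  calc R ^ (-σ) = ∏ _j : ι, R ^ (-t) := by
        rw [Finset.prod_const, Finset.card_univ, ← rpow_natCast, ← rpow_mul (hR₀ n).le, neg_mul,
          div_mul_cancel₀ _ hcard.ne']
    _ ≤ ∏ j, (min w (a j) * (n j + 1)) ^ (-t) :=
        Finset.prod_le_prod (fun _ _ => rpow_nonneg (hR₀ n).le _) fun j _ =>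
          rpow_le_rpow_of_nonpos (mul_pos (hmin j) (by positivity))
            (min_mul_succ_le_add_sum_mul (fun j => (ha j).le) w n j) (by linarith)
    _ ≤ ‖∏ j, (min w (a j) * (n j + 1)) ^ (-t)‖ := le_norm_self _

theorem hasSum_cexp_mul_prod_geometric {u a : ι → ℂ} (hu : ∀ j, ‖u j‖ ≤ 1) (ha : ∀ j, 0 < (a j).re)
    (w : ℂ) {x : ℝ} (hx : 0 < x) :
    HasSum (fun n : ι → ℕ => (∏ j, u j ^ n j) * Complex.exp (-((w + ∑ j, n j * a j) * x)))
      (Complex.exp (-(w * x)) * ∏ j, (1 - u j * Complex.exp (-(a j * x)))⁻¹) := by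
  have hlt (j : ι) : ‖u j * Complex.exp (-(a j * x))‖ < 1 := by
    rw [norm_mul, Complex.norm_exp]
    exact mul_lt_one_of_nonneg_of_lt_one_right (hu j) (exp_nonneg _)
      (by simpa using mul_pos (ha j) hx)
  refine ((hasSum_prod_geometric hlt).mul_left (Complex.exp (-(w * x)))).congr_fun fun n => ?_
  have hexp : Complex.exp (-((w + ∑ j, n j * a j) * x)) =
      Complex.exp (-(w * x)) * ∏ j, Complex.exp (-(a j * x)) ^ n j := by
    simp only [← Complex.exp_nat_mul, ← Complex.exp_sum, ← Complex.exp_add, add_mul, neg_add,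
      Finset.sum_mul, mul_neg, Finset.sum_neg_distrib, mul_assoc]
  simp only [hexp, mul_pow, Finset.prod_mul_distrib]
  ring

theorem mellin_cexp_mul_prod_eq_Gamma_mul_barnesZeta {u a : ι → ℂ} {w s : ℂ}
    (hu : ∀ j, ‖u j‖ ≤ 1) (ha : ∀ j, 0 < (a j).re) (hw : 0 < w.re)
    (hs : Fintype.card ι < s.re) :
    mellin (fun x => Complex.exp (-(w * x)) * ∏ j, (1 - u j * Complex.exp (-(a j * x)))⁻¹) s =
      Complex.Gamma s * barnesZeta u a w s := by
  have hre (n : ι → ℕ) : (w + ∑ j, n j * a j).re = w.re + ∑ j, n j * (a j).re := by simp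
  have hpos (n : ι → ℕ) : 0 < (w + ∑ j, n j * a j).re := by
    rw [hre]
    exact add_sum_mul_pos (fun j => (ha j).le) hw n
  have hcoeff (n : ι → ℕ) : ‖∏ j, u j ^ n j‖ ≤ 1 := by
    rw [norm_prod]
    exact Finset.prod_le_one (fun j _ => norm_nonneg _) fun j _ => by
      rw [norm_pow]; exact pow_le_one₀ (norm_nonneg _) (hu j)
  have hsum : Summable fun n : ι → ℕ =>
      ‖∏ j, u j ^ n j‖ * (w + ∑ j, n j * a j).re ^ (-s.re) := by
    refine (summable_add_sum_mul_rpow_neg ha hw hs).of_nonneg_of_le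
      (fun n => mul_nonneg (norm_nonneg _) (rpow_nonneg (hpos n).le _)) fun n => ?_
    rw [← hre]
    exact mul_le_of_le_one_left (rpow_nonneg (hpos n).le _) (hcoeff n)
  rw [barnesZeta, ← tsum_mul_left]
  exact (hasSum_mellin_cexp hpos ((Nat.cast_nonneg _).trans_lt hs)
    (fun x hx => hasSum_cexp_mul_prod_geometric hu ha w hx) hsum).tsum_eq.symm

end BarnesZeta

section BerndtIntegrals

/-- The parameters `(1+i, 1-i)^p` of the Barnes zeta functions attached to `cosh x ± cos x`: the
left summand of the index type numbers the copies of `1+i`, the right one those of `1-i`. -/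
noncomputable def berndtParams (p : ℕ) : Fin p ⊕ Fin p → ℂ :=
  Sum.elim (fun _ => 1 + Complex.I) fun _ => 1 - Complex.I

theorem barnesZeta_berndtParams (p : ℕ) (ε w s : ℂ) :
    barnesZeta (fun _ => ε) (berndtParams p) w s =
      ∑' nm : (Fin p → ℕ) × (Fin p → ℕ), ε ^ (∑ j, nm.1 j + ∑ j, nm.2 j) *
        (w + (1 + Complex.I) * ∑ j, (nm.1 j : ℂ) + (1 - Complex.I) * ∑ j, (nm.2 j : ℂ)) ^ (-s) := by
  rw [barnesZeta, ← (Equiv.sumArrowEquivProdArrow (Fin p) (Fin p) ℕ).tsum_eq]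
  refine tsum_congr fun n => ?_
  simp [berndtParams, Finset.prod_pow_eq_pow_sum, pow_add, Finset.mul_sum, mul_comm, add_assoc]

theorem barnesZetaRep_eq_barnesZeta (p : ℕ) (s : ℂ) :
    barnesZetaRep p s = barnesZeta (fun _ => 1) (berndtParams p) p s := by
  simp only [barnesZeta_berndtParams, barnesZetaRep, one_pow, one_mul]

theorem barnesZetaRepAlt_eq_barnesZeta (p : ℕ) (s : ℂ) :
    barnesZetaRepAlt p s = barnesZeta (fun _ => -1) (berndtParams p) p s := by
  rw [barnesZeta_berndtParams, barnesZetaRepAlt]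

theorem one_sub_mul_cexp_mul_one_sub_mul_cexp {ε : ℂ} (hε : ε ^ 2 = 1) (x : ℂ) :
    (1 - ε * Complex.exp (-((1 + Complex.I) * x))) *
        (1 - ε * Complex.exp (-((1 - Complex.I) * x))) =
      2 * Complex.exp (-x) * (Complex.cosh x - ε * Complex.cos x) := by
  have hplus : Complex.exp (-((1 + Complex.I) * x)) =
      Complex.exp (-x) * Complex.exp (-x * Complex.I) := by
    rw [← Complex.exp_add]; congr 1; ring
  have hminus : Complex.exp (-((1 - Complex.I) * x)) =
      Complex.exp (-x) * Complex.exp (x * Complex.I) := by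
    rw [← Complex.exp_add]; congr 1; ring
  have hrot : Complex.exp (-x * Complex.I) * Complex.exp (x * Complex.I) = 1 := by
    rw [← Complex.exp_add]; simp
  have hreal : Complex.exp (-x) * Complex.exp x = 1 := by
    rw [← Complex.exp_add]; simp
  rw [hplus, hminus, Complex.cosh, Complex.cos]
  linear_combination (Complex.exp (-x) ^ 2 * Complex.exp (-x * Complex.I) *
    Complex.exp (x * Complex.I)) * hε + Complex.exp (-x) ^ 2 * hrot - hreal

theorem inv_cosh_sub_mul_cos_pow (p : ℕ) {ε : ℂ} (hε : ε ^ 2 = 1) (x : ℂ) :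
    ((Complex.cosh x - ε * Complex.cos x) ^ p)⁻¹ =
      2 ^ p * (Complex.exp (-(p * x)) *
        ∏ j, (1 - ε * Complex.exp (-(berndtParams p j * x)))⁻¹) := by
  have hexp : Complex.exp (-(p * x)) = Complex.exp (-x) ^ p := by
    rw [← Complex.exp_nat_mul, mul_neg]
  simp only [berndtParams, Fintype.prod_sum_type, Sum.elim_inl, Sum.elim_inr, Finset.prod_const,
    Finset.card_univ, Fintype.card_fin]
  rw [hexp, ← mul_pow, ← mul_inv, one_sub_mul_cexp_mul_one_sub_mul_cexp hε, ← mul_pow, ← mul_pow,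
    ← inv_pow]
  congr 1
  field_simp [Complex.exp_ne_zero (-x)]

theorem mellin_inv_cosh_sub_mul_cos_pow {p : ℕ} (hp : 1 ≤ p) {ε s : ℂ} (hε : ε ^ 2 = 1)
    (hs : 2 * (p : ℝ) < s.re) :
    mellin (fun x : ℝ => ((Complex.cosh x - ε * Complex.cos x) ^ p)⁻¹) s =
      2 ^ p * Complex.Gamma s * barnesZeta (fun _ => ε) (berndtParams p) p s := by
  have hnorm : ‖ε‖ = 1 := Complex.norm_eq_one_of_pow_eq_one hε two_ne_zero
  have hre (j : Fin p ⊕ Fin p) : 0 < (berndtParams p j).re := by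
    rcases j with j | j <;> simp [berndtParams]
  have hbarnes := mellin_cexp_mul_prod_eq_Gamma_mul_barnesZeta (w := p) (fun _ => hnorm.le) hre
    (by simpa using Nat.zero_lt_of_lt hp) (by simpa [two_mul] using hs)
  simp only [inv_cosh_sub_mul_cos_pow p hε, ← smul_eq_mul (2 ^ p : ℂ), mellin_const_smul, hbarnes]
  simp only [smul_eq_mul, mul_assoc]

theorem ofReal_setIntegral_rpow_div (s : ℝ) (f : ℝ → ℝ) :
    ((∫ x in Ioi (0 : ℝ), x ^ (s - 1) / f x : ℝ) : ℂ) =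
      ∫ x in Ioi (0 : ℝ), (x : ℂ) ^ ((s : ℂ) - 1) / (f x : ℂ) := by
  rw [← integral_complex_ofReal]
  refine setIntegral_congr_fun measurableSet_Ioi fun x hx => ?_
  simp [Complex.ofReal_cpow (le_of_lt hx)]

theorem berndt_integral_eval_general (p : ℕ) (hp : 1 ≤ p) (s : ℂ) (hs : 2 * (p : ℝ) < s.re) :
    (∫ x in Ioi (0 : ℝ), (x : ℂ) ^ (s - 1) / ((Real.cosh x - Real.cos x) ^ p : ℝ) =
        (2 : ℂ) ^ p * Complex.Gamma s * barnesZetaRep p s) ∧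
    (∫ x in Ioi (0 : ℝ), (x : ℂ) ^ (s - 1) / ((Real.cosh x + Real.cos x) ^ p : ℝ) =
        (2 : ℂ) ^ p * Complex.Gamma s * barnesZetaRepAlt p s) := by
  rw [barnesZetaRep_eq_barnesZeta, barnesZetaRepAlt_eq_barnesZeta,
    ← mellin_inv_cosh_sub_mul_cos_pow hp (one_pow 2) hs,
    ← mellin_inv_cosh_sub_mul_cos_pow hp neg_one_sq hs]
  simp [mellin, div_eq_mul_inv]

end BerndtIntegrals

theorem berndt_integral_eval (p : ℕ) (hp : 1 ≤ p) (s : ℝ) (hs : 2 * (p : ℝ) < s) :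
    ((∫ x in Set.Ioi (0 : ℝ), x ^ (s - 1) / (Real.cosh x - Real.cos x) ^ p : ℝ) =
        (2 : ℂ) ^ p * Complex.Gamma s * barnesZetaRep p s) ∧
    ((∫ x in Set.Ioi (0 : ℝ), x ^ (s - 1) / (Real.cosh x + Real.cos x) ^ p : ℝ) =
        (2 : ℂ) ^ p * Complex.Gamma s * barnesZetaRepAlt p s) := by
  simpa only [ofReal_setIntegral_rpow_div] using berndt_integral_eval_general p hp s hs
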